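/- Let Ω ⊆ ℝ^n be open, b ≥ 0 a constant, and h : Ω → ℝ a smooth convex function with D²h(x) positive definite for all x ∈ Ω, satisfying Δh + b·det(D²h) = 1 on Ω. Set f = (det D²h)^{1/n} and define the linearized operator L g = Δg + b·det(D²h)·tr((D²h)^{−1} D²g). Then L f ≤ 0 on Ω; that is, f is a supersolution of the linearized equation. -/

import Mathlib

/-- The Hessian matrix `D²f(x)` of `f : ℝⁿ → ℝ` at `x`, with entries `∂_i ∂_j f(x)`. -/
noncomputable def Hess (n : ℕ) (f : EuclideanSpace ℝ (Fin n) → ℝ)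
    (x : EuclideanSpace ℝ (Fin n)) : Matrix (Fin n) (Fin n) ℝ :=
  Matrix.of fun i j =>
    iteratedFDeriv ℝ 2 f x ![EuclideanSpace.single i 1, EuclideanSpace.single j 1]

/-!
Write `A = D²h`, `t = ∇ log det A` and `f = (det A) ^ α`. Differentiating `f` twice produces fourth
derivatives of `h` only through `∑ i, tr (A⁻¹ ∂ᵢ²A)` and `tr (A⁻¹ D²(det A))`. As
`∑ i, ∂ᵢ²A = D²(Δh)`, these cancel in `L f` by the second derivative of the equation contracted
with `A⁻¹`, which leaves
`L f = α f (∑ i, (α tᵢ² - tr ((A⁻¹ ∂ᵢA)²)) - b (1 - α) (det A) tᵀ A⁻¹ t)`.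
Since `tᵢ = tr (A⁻¹ ∂ᵢA)` and `A⁻¹ ∂ᵢA` is similar to a symmetric matrix, Cauchy–Schwarz gives
`tᵢ² ≤ n tr ((A⁻¹ ∂ᵢA)²)`, so both terms are nonpositive for `0 ≤ α ≤ 1 / n` and `b ≥ 0`.
-/

open Filter Topology Matrix

section DirectionalDerivative

variable {E F G : Type*} [NormedAddCommGroup E] [NormedSpace ℝ E] [NormedAddCommGroup F]
  [NormedSpace ℝ F] [NormedAddCommGroup G] [NormedSpace ℝ G] {f g : E → F} {x : E}

/-- The directional derivative `∂_v f`, as a function of the base point so that it can be iterated.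
Where `f` is not differentiable its value is `0`, as for `fderiv`. -/
noncomputable def dirDeriv (v : E) (f : E → F) (x : E) : F :=
  fderiv ℝ f x v

lemma dirDeriv_congr (hfg : f =ᶠ[𝓝 x] g) (v : E) : dirDeriv v f =ᶠ[𝓝 x] dirDeriv v g :=
  hfg.fderiv.fun_comp fun L => L v

lemma contDiffAt_dirDeriv {m k : WithTop ℕ∞} (hf : ContDiffAt ℝ k f x) (hmk : m + 1 ≤ k) (v : E) :
    ContDiffAt ℝ m (dirDeriv v f) x :=
  (hf.fderiv_right hmk).clm_apply contDiffAt_const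

lemma dirDeriv_clm_comp (L : F →L[ℝ] G) (hf : DifferentiableAt ℝ f x) (v : E) :
    dirDeriv v (fun y => L (f y)) x = L (dirDeriv v f x) :=
  DFunLike.congr_fun (L.hasFDerivAt.comp x hf.hasFDerivAt).fderiv v

lemma dirDeriv_mul {R : Type*} [NormedRing R] [NormedAlgebra ℝ R] {a b : E → R}
    (ha : DifferentiableAt ℝ a x) (hb : DifferentiableAt ℝ b x) (v : E) :
    dirDeriv v (fun y => a y * b y) x = dirDeriv v a x * b x + a x * dirDeriv v b x := by
  rw [dirDeriv, fderiv_fun_mul' ha hb, add_comm]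
  rfl

lemma dirDeriv_const_mul (c : ℝ) {f : E → ℝ} (hf : DifferentiableAt ℝ f x) (v : E) :
    dirDeriv v (fun y => c * f y) x = c * dirDeriv v f x :=
  dirDeriv_clm_comp (c • ContinuousLinearMap.id ℝ ℝ) hf v

lemma dirDeriv_dirDeriv (hf : ContDiffAt ℝ 2 f x) (u v : E) :
    dirDeriv u (dirDeriv v f) x = fderiv ℝ (fderiv ℝ f) x u v :=
  dirDeriv_clm_comp (ContinuousLinearMap.apply ℝ F v)
    ((hf.fderiv_right (m := 1) (by norm_num)).differentiableAt one_ne_zero) u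

lemma dirDeriv_dirDeriv_clm_comp (L : F →L[ℝ] G) (hf : ContDiffAt ℝ 2 f x) (u v : E) :
    dirDeriv u (dirDeriv v fun y => L (f y)) x = L (dirDeriv u (dirDeriv v f) x) := by
  have hfirst : (dirDeriv v fun y => L (f y)) =ᶠ[𝓝 x] fun y => L (dirDeriv v f y) :=
    (hf.eventually (by simp)).mono fun y hy =>
      dirDeriv_clm_comp L (hy.differentiableAt two_ne_zero) v
  rw [(dirDeriv_congr hfirst u).eq_of_nhds]
  exact dirDeriv_clm_comp L
    ((contDiffAt_dirDeriv (m := 1) hf (by norm_num) v).differentiableAt one_ne_zero) u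

lemma dirDeriv_comm (hf : ContDiffAt ℝ 2 f x) (u v : E) :
    dirDeriv u (dirDeriv v f) =ᶠ[𝓝 x] dirDeriv v (dirDeriv u f) := by
  filter_upwards [hf.eventually (by simp)] with y hy
  rw [dirDeriv_dirDeriv hy, dirDeriv_dirDeriv hy]
  exact (hy.isSymmSndFDerivAt (by simp)).eq u v

lemma dirDeriv_four_swap_pairs (hf : ContDiffAt ℝ 4 f x) (u v w z : E) :
    dirDeriv u (dirDeriv v (dirDeriv w (dirDeriv z f))) x =
      dirDeriv w (dirDeriv z (dirDeriv u (dirDeriv v f))) x := by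
  have hf₁ (a : E) : ContDiffAt ℝ 3 (dirDeriv a f) x := contDiffAt_dirDeriv hf (by norm_num) a
  have hf₂ (a b : E) : ContDiffAt ℝ 2 (dirDeriv a (dirDeriv b f)) x :=
    contDiffAt_dirDeriv (hf₁ b) (by norm_num) a
  calc dirDeriv u (dirDeriv v (dirDeriv w (dirDeriv z f))) x
      = dirDeriv u (dirDeriv w (dirDeriv v (dirDeriv z f))) x :=
        (dirDeriv_congr (dirDeriv_comm ((hf₁ z).of_le (by norm_num)) v w) u).eq_of_nhds
    _ = dirDeriv w (dirDeriv u (dirDeriv v (dirDeriv z f))) x :=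
        (dirDeriv_comm (hf₂ v z) u w).eq_of_nhds
    _ = dirDeriv w (dirDeriv u (dirDeriv z (dirDeriv v f))) x :=
        (dirDeriv_congr (dirDeriv_congr
          (dirDeriv_comm (hf.of_le (by norm_num)) v z) u) w).eq_of_nhds
    _ = dirDeriv w (dirDeriv z (dirDeriv u (dirDeriv v f))) x :=
        (dirDeriv_congr (dirDeriv_comm ((hf₁ v).of_le (by norm_num)) u z) w).eq_of_nhds

end DirectionalDerivative

section Matrix

variable {ι : Type*} [Fintype ι]

lemma trace_sq_le_card_mul_trace_mul_transpose {R : Type*} [CommRing R] [LinearOrder R]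
    [IsStrictOrderedRing R] (C : Matrix ι ι R) :
    C.trace ^ 2 ≤ Fintype.card ι * (C * C.transpose).trace :=
  calc C.trace ^ 2 ≤ Fintype.card ι * ∑ i, C i i ^ 2 := sq_sum_le_card_mul_sum_sq
    _ ≤ Fintype.card ι * ∑ i, ∑ j, C i j ^ 2 := by
        gcongr with i
        exact Finset.single_le_sum (f := fun j => C i j ^ 2) (fun j _ => sq_nonneg _)
          (Finset.mem_univ i)
    _ = Fintype.card ι * (C * C.transpose).trace := by
        simp only [Matrix.trace, Matrix.diag, Matrix.mul_apply, Matrix.transpose_apply, sq]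

open scoped MatrixOrder Matrix.Norms.L2Operator in
lemma trace_mul_sq_le_card_mul_trace_mul_sq {W B : Matrix ι ι ℝ} (hW : W.PosSemidef)
    (hB : B.IsSymm) : (W * B).trace ^ 2 ≤ Fintype.card ι * (W * B * (W * B)).trace := by
  classical
  obtain ⟨S, rfl⟩ : ∃ S : Matrix ι ι ℝ, W = S.transpose * S := by
    simpa [Matrix.star_eq_conjTranspose] using
      CStarAlgebra.nonneg_iff_eq_star_mul_self.1 hW.nonneg
  set C := S * B * S.transpose with hC
  have hCsymm : C.transpose = C := by
    simp only [hC, Matrix.transpose_mul, Matrix.transpose_transpose, hB.eq, Matrix.mul_assoc]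
  have htrace : (S.transpose * S * B).trace = C.trace := by
    rw [Matrix.mul_assoc, Matrix.trace_mul_comm]
  have htrace_sq : (S.transpose * S * B * (S.transpose * S * B)).trace =
      (C * C.transpose).trace := by
    rw [hCsymm, Matrix.mul_assoc, Matrix.mul_assoc, Matrix.trace_mul_comm]
    simp only [hC, Matrix.mul_assoc]
  rw [htrace, htrace_sq]
  exact trace_sq_le_card_mul_trace_mul_transpose C

end Matrix

section MatrixCalculus

open scoped Matrix.Norms.Operator

variable {ι E : Type*} [Fintype ι] [NormedAddCommGroup E] [NormedSpace ℝ E]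
  {A : E → Matrix ι ι ℝ} {x : E}

lemma dirDeriv_trace (hA : DifferentiableAt ℝ A x) (v : E) :
    dirDeriv v (fun y => (A y).trace) x = (dirDeriv v A x).trace :=
  dirDeriv_clm_comp (Matrix.traceLinearMap ι ℝ ℝ).toContinuousLinearMap hA v

variable [DecidableEq ι]

lemma contDiff_det {k : WithTop ℕ∞} : ContDiff ℝ k (Matrix.det : Matrix ι ι ℝ → ℝ) := by
  have hentry (i j : ι) : ContDiff ℝ k fun M : Matrix ι ι ℝ => M i j :=
    (Matrix.entryLinearMap ℝ ℝ i j).toContinuousLinearMap.contDiff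
  simp only [funext Matrix.det_apply]
  exact ContDiff.sum fun σ _ => (contDiff_prod fun i _ => hentry _ _).const_smul _

lemma fderiv_det {M : Matrix ι ι ℝ} (hM : IsUnit M.det) (B : Matrix ι ι ℝ) :
    fderiv ℝ Matrix.det M B = M.det * (M⁻¹ * B).trace := by
  have hline : HasDerivAt (fun r : ℝ => (M + r • B).det) (fderiv ℝ Matrix.det M B) 0 :=
    (contDiff_det.differentiable one_ne_zero M).hasFDerivAt.hasLineDerivAt B
  let q := (1 + (Polynomial.X : Polynomial ℝ) • (M⁻¹ * B).map Polynomial.C).det.divX.divX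
  have hexpand (r : ℝ) : (M + r • B).det =
      M.det * (1 + (M⁻¹ * B).trace * r + q.eval r * r ^ 2) := by
    rw [← Matrix.det_one_add_smul, ← Matrix.det_mul, mul_add, mul_one, mul_smul_comm,
      Matrix.mul_nonsing_inv_cancel_left _ _ hM]
  have hquad : HasDerivAt (fun r : ℝ => q.eval r * r ^ 2) 0 0 := by
    simpa using (q.hasDerivAt 0).fun_mul (hasDerivAt_pow 2 (0 : ℝ))
  have hexpansion_deriv : HasDerivAt
      (fun r : ℝ => M.det * (1 + (M⁻¹ * B).trace * r + q.eval r * r ^ 2))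
      (M.det * (M⁻¹ * B).trace) 0 := by
    simpa using ((((hasDerivAt_id (0 : ℝ)).const_mul (M⁻¹ * B).trace).const_add 1).add
      hquad).const_mul M.det
  exact (funext hexpand ▸ hline).unique hexpansion_deriv

/-- The logarithmic derivative `A⁻¹ ∂_v A` of a matrix-valued function; its trace is
`∂_v log det A`. -/
noncomputable def matLogDeriv (v : E) (A : E → Matrix ι ι ℝ) (x : E) : Matrix ι ι ℝ :=
  (A x)⁻¹ * dirDeriv v A x

lemma differentiableAt_matrix_inv (hA : DifferentiableAt ℝ A x) (hx : IsUnit (A x)) :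
    DifferentiableAt ℝ (fun y => (A y)⁻¹) x := by
  simp only [Matrix.nonsing_inv_eq_ringInverse]
  exact hA.inverse hx

lemma dirDeriv_matrix_inv (hA : DifferentiableAt ℝ A x) (hx : IsUnit (A x)) (v : E) :
    dirDeriv v (fun y => (A y)⁻¹) x = -((A x)⁻¹ * dirDeriv v A x * (A x)⁻¹) := by
  obtain ⟨U, hU⟩ := hx
  have hinv := hasFDerivAt_ringInverse (𝕜 := ℝ) U
  rw [hU] at hinv
  simp only [Matrix.nonsing_inv_eq_ringInverse]
  refine (DFunLike.congr_fun (hinv.comp x hA.hasFDerivAt).fderiv v).trans ?_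
  rw [← hU, Ring.inverse_unit]
  rfl

lemma dirDeriv_matLogDeriv (hA : ContDiffAt ℝ 2 A x) (hx : IsUnit (A x)) (u v : E) :
    dirDeriv u (matLogDeriv v A) x =
      (A x)⁻¹ * dirDeriv u (dirDeriv v A) x - matLogDeriv u A x * matLogDeriv v A x := by
  have hA₁ : DifferentiableAt ℝ A x := hA.differentiableAt two_ne_zero
  have hA' : DifferentiableAt ℝ (dirDeriv v A) x :=
    (contDiffAt_dirDeriv (m := 1) hA (by norm_num) v).differentiableAt one_ne_zero
  change dirDeriv u (fun y => (A y)⁻¹ * dirDeriv v A y) x = _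
  rw [dirDeriv_mul (differentiableAt_matrix_inv hA₁ hx) hA', dirDeriv_matrix_inv hA₁ hx]
  simp only [matLogDeriv]
  noncomm_ring

lemma dirDeriv_det (hA : DifferentiableAt ℝ A x) (hx : IsUnit (A x).det) (v : E) :
    dirDeriv v (fun y => (A y).det) x = (A x).det * (matLogDeriv v A x).trace :=
  (DFunLike.congr_fun ((contDiff_det.differentiable one_ne_zero (A x)).hasFDerivAt.comp x
    hA.hasFDerivAt).fderiv v).trans (fderiv_det hx _)

lemma dirDeriv_det_rpow (hA : DifferentiableAt ℝ A x) (hx : (A x).det ≠ 0) (α : ℝ) (v : E) :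
    dirDeriv v (fun y => (A y).det ^ α) x = α * ((A x).det ^ α * (matLogDeriv v A x).trace) := by
  have hdet : DifferentiableAt ℝ (fun y => (A y).det) x :=
    (contDiff_det.differentiable one_ne_zero (A x)).comp x hA
  calc dirDeriv v (fun y => (A y).det ^ α) x
      = α * (A x).det ^ (α - 1) * dirDeriv v (fun y => (A y).det) x :=
        DFunLike.congr_fun (hdet.hasFDerivAt.rpow_const (Or.inl hx)).fderiv v
    _ = α * ((A x).det ^ α * (matLogDeriv v A x).trace) := by
        rw [dirDeriv_det hA hx.isUnit, Real.rpow_sub_one hx]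
        field_simp

lemma contDiffAt_det_rpow {k : WithTop ℕ∞} (hA : ContDiffAt ℝ k A x) (hx : (A x).det ≠ 0)
    (α : ℝ) : ContDiffAt ℝ k (fun y => (A y).det ^ α) x :=
  (contDiff_det.contDiffAt.comp x hA).rpow_const_of_ne hx

lemma dirDeriv_dirDeriv_det_rpow (hA : ContDiffAt ℝ 2 A x) (hx : (A x).det ≠ 0) (α : ℝ)
    (u v : E) :
    dirDeriv u (dirDeriv v fun y => (A y).det ^ α) x =
      α * (A x).det ^ α * (α * ((matLogDeriv u A x).trace * (matLogDeriv v A x).trace) +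
        ((A x)⁻¹ * dirDeriv u (dirDeriv v A) x).trace -
        (matLogDeriv u A x * matLogDeriv v A x).trace) := by
  have hdet_ne : ∀ᶠ y in 𝓝 x, (A y).det ≠ 0 :=
    (contDiff_det (k := 0).continuous.continuousAt.comp hA.continuousAt).eventually_ne hx
  have hfirst : (dirDeriv v fun y => (A y).det ^ α) =ᶠ[𝓝 x]
      fun y => α * ((A y).det ^ α * (matLogDeriv v A y).trace) := by
    filter_upwards [hdet_ne, hA.eventually (by simp)] with y hy hAy
    exact dirDeriv_det_rpow (hAy.differentiableAt two_ne_zero) hy α v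
  have hunit : IsUnit (A x) := (Matrix.isUnit_iff_isUnit_det _).2 hx.isUnit
  have hA₁ : DifferentiableAt ℝ A x := hA.differentiableAt two_ne_zero
  have hlog : DifferentiableAt ℝ (matLogDeriv v A) x :=
    (differentiableAt_matrix_inv hA₁ hunit).mul
      ((contDiffAt_dirDeriv (m := 1) hA (by norm_num) v).differentiableAt one_ne_zero)
  have htrace : DifferentiableAt ℝ (fun y => (matLogDeriv v A y).trace) x :=
    (Matrix.traceLinearMap ι ℝ ℝ).toContinuousLinearMap.differentiableAt.comp x hlog
  have hpow : DifferentiableAt ℝ (fun y => (A y).det ^ α) x :=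
    (contDiffAt_det_rpow hA hx α).differentiableAt two_ne_zero
  rw [(dirDeriv_congr hfirst u).eq_of_nhds, dirDeriv_const_mul α (hpow.fun_mul htrace),
    dirDeriv_mul hpow htrace, dirDeriv_det_rpow hA₁ hx, dirDeriv_trace hlog,
    dirDeriv_matLogDeriv hA hunit, Matrix.trace_sub]
  ring

end MatrixCalculus

section Hessian

open scoped Matrix.Norms.Operator

variable {n : ℕ} {f g h : EuclideanSpace ℝ (Fin n) → ℝ} {x : EuclideanSpace ℝ (Fin n)}

local notation "∂[" i "]" => dirDeriv (EuclideanSpace.single i (1 : ℝ))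

lemma hess_apply (hf : ContDiffAt ℝ 2 f x) (i j : Fin n) : Hess n f x i j = ∂[i] (∂[j] f) x := by
  rw [dirDeriv_dirDeriv hf, Hess, Matrix.of_apply, iteratedFDeriv_two_apply]
  rfl

lemma hess_congr (hfg : f =ᶠ[𝓝 x] g) : Hess n f x = Hess n g x := by
  simp only [Hess, (hfg.iteratedFDeriv ℝ 2).eq_of_nhds]

lemma hess_const (c : ℝ) : Hess n (fun _ => c) x = 0 := by
  ext i j
  simp [Hess, iteratedFDeriv_const_of_ne two_ne_zero]

lemma hess_add (hf : ContDiffAt ℝ 2 f x) (hg : ContDiffAt ℝ 2 g x) :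
    Hess n (fun y => f y + g y) x = Hess n f x + Hess n g x := by
  ext i j
  simp [Hess, fun_iteratedFDeriv_add_apply hf hg]

lemma hess_const_mul (c : ℝ) (hf : ContDiffAt ℝ 2 f x) :
    Hess n (fun y => c * f y) x = c • Hess n f x := by
  ext i j
  simp [Hess, ← smul_eq_mul, iteratedFDeriv_const_smul_apply' hf]

lemma contDiffAt_hess {m k : WithTop ℕ∞} (hf : ContDiffAt ℝ k f x) (hmk : m + 2 ≤ k) :
    ContDiffAt ℝ m (Hess n f) x := by
  have hentries : ContDiffAt ℝ m
      (fun y i j => iteratedFDeriv ℝ 2 f y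
        ![EuclideanSpace.single i 1, EuclideanSpace.single j 1]) x :=
    contDiffAt_pi.2 fun i => contDiffAt_pi.2 fun j =>
      (ContinuousMultilinearMap.apply ℝ (fun _ : Fin 2 => EuclideanSpace ℝ (Fin n)) ℝ
        ![EuclideanSpace.single i 1, EuclideanSpace.single j 1]).contDiff.contDiffAt.comp x
        (hf.iteratedFDeriv_right (i := 2) hmk)
  exact (Matrix.ofLinearEquiv ℝ).toLinearMap.toContinuousLinearMap.contDiff.contDiffAt.comp x
    hentries

lemma hess_isSymm (hf : ContDiffAt ℝ 2 f x) : (Hess n f x).IsSymm := by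
  ext i j
  rw [Matrix.transpose_apply, hess_apply hf, hess_apply hf, (dirDeriv_comm hf _ _).eq_of_nhds]

lemma dirDeriv_hess_isSymm (hf : ContDiffAt ℝ 3 f x) (v : EuclideanSpace ℝ (Fin n)) :
    (dirDeriv v (Hess n f) x).IsSymm := by
  let T : Matrix (Fin n) (Fin n) ℝ →L[ℝ] Matrix (Fin n) (Fin n) ℝ :=
    (Matrix.transposeLinearEquiv (Fin n) (Fin n) ℝ ℝ).toLinearMap.toContinuousLinearMap
  have hT : (fun y => T (Hess n f y)) =ᶠ[𝓝 x] Hess n f := by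
    filter_upwards [hf.eventually (by simp)] with y hy
    exact hess_isSymm (hy.of_le (by norm_num))
  have hH : DifferentiableAt ℝ (Hess n f) x :=
    (contDiffAt_hess (m := 1) hf (by norm_num)).differentiableAt one_ne_zero
  exact (dirDeriv_clm_comp T hH v).symm.trans (dirDeriv_congr hT v).eq_of_nhds

lemma dirDeriv_dirDeriv_hess_apply (hf : ContDiffAt ℝ 4 f x) (u v : EuclideanSpace ℝ (Fin n))
    (i j : Fin n) :
    (dirDeriv u (dirDeriv v (Hess n f)) x) i j = dirDeriv u (dirDeriv v (∂[i] (∂[j] f))) x := by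
  have hentry : (fun y => Hess n f y i j) =ᶠ[𝓝 x] ∂[i] (∂[j] f) := by
    filter_upwards [hf.eventually (by simp)] with y hy
    exact hess_apply (hy.of_le (by norm_num)) i j
  exact (dirDeriv_dirDeriv_clm_comp (Matrix.entryLinearMap ℝ ℝ i j).toContinuousLinearMap
    (contDiffAt_hess hf (by norm_num)) u v).symm.trans
    (dirDeriv_congr (dirDeriv_congr hentry v) u).eq_of_nhds

lemma hess_trace_hess (hf : ContDiffAt ℝ 4 f x) :
    Hess n (fun y => (Hess n f y).trace) x = ∑ i, ∂[i] (∂[i] (Hess n f)) x := by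
  have hH : ContDiffAt ℝ 2 (Hess n f) x := contDiffAt_hess hf (by norm_num)
  let tr : Matrix (Fin n) (Fin n) ℝ →L[ℝ] ℝ :=
    (Matrix.traceLinearMap (Fin n) ℝ ℝ).toContinuousLinearMap
  ext k l
  calc Hess n (fun y => (Hess n f y).trace) x k l
      = (∂[k] (∂[l] (Hess n f)) x).trace :=
        (hess_apply (tr.contDiff.contDiffAt.comp x hH) k l).trans
          (dirDeriv_dirDeriv_clm_comp tr hH _ _)
    _ = ∑ i, (∂[i] (∂[i] (Hess n f)) x) k l :=
        Finset.sum_congr rfl fun i _ => by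
          rw [Matrix.diag_apply, dirDeriv_dirDeriv_hess_apply hf, dirDeriv_dirDeriv_hess_apply hf,
            dirDeriv_four_swap_pairs hf]
    _ = (∑ i, ∂[i] (∂[i] (Hess n f)) x) k l := (Matrix.sum_apply _ _ _ _).symm

/-- The linearization at `h` of the operator `h ↦ Δh + b det(D²h)`, applied to `g` at `x`. -/
noncomputable def linearizedOperator (b : ℝ) (h g : EuclideanSpace ℝ (Fin n) → ℝ)
    (x : EuclideanSpace ℝ (Fin n)) : ℝ :=
  (Hess n g x).trace + b * (Hess n h x).det * ((Hess n h x)⁻¹ * Hess n g x).trace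

/-- The gradient of `log det A`, with entries `tr(A⁻¹ ∂_i A)`. -/
noncomputable def gradLogDet (A : EuclideanSpace ℝ (Fin n) → Matrix (Fin n) (Fin n) ℝ)
    (x : EuclideanSpace ℝ (Fin n)) : Fin n → ℝ :=
  fun i => (matLogDeriv (EuclideanSpace.single i 1) A x).trace

variable {A : EuclideanSpace ℝ (Fin n) → Matrix (Fin n) (Fin n) ℝ}

lemma hess_det_rpow_apply (hA : ContDiffAt ℝ 2 A x) (hx : (A x).det ≠ 0) (α : ℝ) (i j : Fin n) :
    Hess n (fun y => (A y).det ^ α) x i j =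
      α * (A x).det ^ α * (α * (gradLogDet A x i * gradLogDet A x j) +
        ((A x)⁻¹ * ∂[i] (∂[j] A) x).trace -
        (matLogDeriv (EuclideanSpace.single i 1) A x *
          matLogDeriv (EuclideanSpace.single j 1) A x).trace) :=
  (hess_apply (contDiffAt_det_rpow hA hx α) i j).trans (dirDeriv_dirDeriv_det_rpow hA hx α _ _)

lemma hess_det_rpow (hA : ContDiffAt ℝ 2 A x) (hx : (A x).det ≠ 0) (α : ℝ) :
    Hess n (fun y => (A y).det ^ α) x =
      (α * (A x).det ^ α) • ((A x).det⁻¹ • Hess n (fun y => (A y).det) x -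
        (1 - α) • Matrix.vecMulVec (gradLogDet A x) (gradLogDet A x)) := by
  ext i j
  have hdet := hess_det_rpow_apply hA hx 1 i j
  simp only [Real.rpow_one, one_mul] at hdet
  simp only [hess_det_rpow_apply hA hx α, Matrix.smul_apply, Matrix.sub_apply, hdet,
    Matrix.vecMulVec_apply, smul_eq_mul, inv_mul_cancel_left₀ hx]
  ring

variable {b c α : ℝ}

lemma hess_trace_add_hess_det_eq_zero (hA : ContDiffAt ℝ 2 A x)
    (heq : ∀ᶠ y in 𝓝 x, (A y).trace + b * (A y).det = c) :
    Hess n (fun y => (A y).trace) x + b • Hess n (fun y => (A y).det) x = 0 := by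
  have htrace : ContDiffAt ℝ 2 (fun y => (A y).trace) x :=
    (Matrix.traceLinearMap (Fin n) ℝ ℝ).toContinuousLinearMap.contDiff.contDiffAt.comp x hA
  have hdet : ContDiffAt ℝ 2 (fun y => (A y).det) x := contDiff_det.contDiffAt.comp x hA
  rw [← hess_const_mul b hdet, ← hess_add htrace (contDiffAt_const.mul hdet), hess_congr heq,
    hess_const]

lemma linearizedOperator_det_rpow (hh : ContDiffAt ℝ 4 h x) (hx : (Hess n h x).det ≠ 0)
    (heq : ∀ᶠ y in 𝓝 x, (Hess n h y).trace + b * (Hess n h y).det = c) (α : ℝ) :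
    linearizedOperator b h (fun y => (Hess n h y).det ^ α) x =
      α * (Hess n h x).det ^ α *
        (∑ i, (α * gradLogDet (Hess n h) x i ^ 2 -
            (matLogDeriv (EuclideanSpace.single i 1) (Hess n h) x *
              matLogDeriv (EuclideanSpace.single i 1) (Hess n h) x).trace) -
          b * (Hess n h x).det * (1 - α) *
            gradLogDet (Hess n h) x ⬝ᵥ ((Hess n h x)⁻¹ *ᵥ gradLogDet (Hess n h) x)) := by
  have hH : ContDiffAt ℝ 2 (Hess n h) x := contDiffAt_hess hh (by norm_num)
  have hentry := hess_det_rpow_apply hH hx α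
  have hrank_one := hess_det_rpow hH hx α
  set W := (Hess n h x)⁻¹
  set t := gradLogDet (Hess n h) x
  -- Since `D²` commutes with `Δ`, this removes the fourth derivatives of `h` from the trace below.
  have hsecond : ∑ i, (W * ∂[i] (∂[i] (Hess n h)) x).trace +
      b * (W * Hess n (fun y => (Hess n h y).det) x).trace = 0 := by
    have hcontracted :=
      congrArg (fun M => (W * M).trace) (hess_trace_add_hess_det_eq_zero hH heq)
    simpa [hess_trace_hess hh, mul_add, Matrix.mul_sum, Matrix.trace_sum] using hcontracted
  have htrace : (Hess n (fun y => (Hess n h y).det ^ α) x).trace =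
      α * (Hess n h x).det ^ α * (∑ i, (α * t i ^ 2 -
        (matLogDeriv (EuclideanSpace.single i 1) (Hess n h) x *
          matLogDeriv (EuclideanSpace.single i 1) (Hess n h) x).trace) +
        ∑ i, (W * ∂[i] (∂[i] (Hess n h)) x).trace) := by
    rw [← Finset.sum_add_distrib, Finset.mul_sum]
    refine Finset.sum_congr rfl fun i _ => ?_
    rw [Matrix.diag_apply, hentry]
    ring
  have hweighted : (W * Hess n (fun y => (Hess n h y).det ^ α) x).trace =
      α * (Hess n h x).det ^ α * ((Hess n h x).det⁻¹ *
        (W * Hess n (fun y => (Hess n h y).det) x).trace - (1 - α) * t ⬝ᵥ (W *ᵥ t)) := by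
    rw [hrank_one]
    simp only [mul_sub, Matrix.mul_smul, Matrix.trace_smul, Matrix.trace_sub,
      Matrix.mul_vecMulVec, Matrix.trace_vecMulVec, dotProduct_comm, smul_eq_mul]
  rw [linearizedOperator, htrace, hweighted]
  field_simp
  linear_combination α * (Hess n h x).det ^ α * hsecond

lemma mul_gradLogDet_sq_le (hA : (A x).PosDef) {i : Fin n} (hsymm : (∂[i] A x).IsSymm)
    (hα : α ≤ 1 / (n : ℝ)) :
    α * gradLogDet A x i ^ 2 ≤
      (matLogDeriv (EuclideanSpace.single i 1) A x *
        matLogDeriv (EuclideanSpace.single i 1) A x).trace := by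
  have hn : (0 : ℝ) < n := Nat.cast_pos.2 i.pos
  have hcauchy := trace_mul_sq_le_card_mul_trace_mul_sq hA.inv.posSemidef hsymm
  rw [Fintype.card_fin] at hcauchy
  calc α * gradLogDet A x i ^ 2 ≤ 1 / (n : ℝ) * gradLogDet A x i ^ 2 := by gcongr
    _ ≤ _ := by
        rw [one_div, inv_mul_le_iff₀ hn]
        exact hcauchy

theorem statement15_general (hb : 0 ≤ b) (hα : 0 ≤ α) (hαn : α ≤ 1 / (n : ℝ))
    (hh : ContDiffAt ℝ 4 h x) (hpos : (Hess n h x).PosDef)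
    (heq : ∀ᶠ y in 𝓝 x, (Hess n h y).trace + b * (Hess n h y).det = c) :
    linearizedOperator b h (fun y => (Hess n h y).det ^ α) x ≤ 0 := by
  rw [linearizedOperator_det_rpow hh hpos.det_pos.ne' heq]
  have hα_one : α ≤ 1 := hαn.trans (by simpa using Nat.cast_inv_le_one n)
  have hquad : 0 ≤ gradLogDet (Hess n h) x ⬝ᵥ ((Hess n h x)⁻¹ *ᵥ gradLogDet (Hess n h) x) :=
    hpos.inv.posSemidef.dotProduct_mulVec_nonneg _
  have hdet : 0 ≤ (Hess n h x).det := hpos.det_pos.le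
  refine mul_nonpos_of_nonneg_of_nonpos (by positivity) (sub_nonpos.2 ?_)
  calc _ ≤ (0 : ℝ) := Finset.sum_nonpos fun i _ => sub_nonpos.2 <|
        mul_gradLogDet_sq_le hpos (dirDeriv_hess_isSymm (hh.of_le (by norm_num)) _) hαn
    _ ≤ _ := mul_nonneg (mul_nonneg (mul_nonneg hb hdet) (sub_nonneg.2 hα_one)) hquad

end Hessian

/-- The key computation in Proposition 5.5: if `h` is a smooth convex function with positive
definite Hessian satisfying `Δh + b·det(D²h) = 1` on an open set `Ω`, then
`f = det(D²h)^{1/n}` is a supersolution of the linearized equation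
`L g = Δg + b·det(D²h)·tr((D²h)⁻¹ D²g)`, i.e. `L f ≤ 0` on `Ω`. -/
theorem statement15 (n : ℕ) (b : ℝ) (hb : 0 ≤ b)
    (Ω : Set (EuclideanSpace ℝ (Fin n))) (hΩ : IsOpen Ω)
    (h : EuclideanSpace ℝ (Fin n) → ℝ)
    (hsmooth : ContDiffOn ℝ (⊤ : ℕ∞) h Ω)
    (hpos : ∀ x ∈ Ω, (Hess n h x).PosDef)
    (heq : ∀ x ∈ Ω, (Hess n h x).trace + b * (Hess n h x).det = 1) :
    ∀ x ∈ Ω,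
      (Hess n (fun y => (Hess n h y).det ^ (1 / (n : ℝ))) x).trace +
        b * (Hess n h x).det *
          ((Hess n h x)⁻¹ * Hess n (fun y => (Hess n h y).det ^ (1 / (n : ℝ))) x).trace ≤ 0 := by
  intro x hx
  have hΩx : Ω ∈ 𝓝 x := hΩ.mem_nhds hx
  exact statement15_general hb (by positivity) le_rfl
    (contDiffAt_infty.1 (hsmooth.contDiffAt hΩx) 4) (hpos x hx) (eventually_of_mem hΩx heq)
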